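/- arXiv:0805.1605 — 3 statements merged into one kernel-verified Lean document; each statement's English description precedes it below -/
import Mathlib

section
/- Let P and P' be convex polytopes in ℝ³ with non-empty interior such that (P, −P) and (P', −P') are synisothetic. Then DP = DP', where DP = P + (−P) is the difference body. -/
open MeasureTheory Pointwise

/-- The exposed face of `P` in direction `w`: `P_w = {x ∈ P : x·w = h_P(w)}`. -/
def exposedFace (P : Set (EuclideanSpace ℝ (Fin 3)))
    (w : EuclideanSpace ℝ (Fin 3)) : Set (EuclideanSpace ℝ (Fin 3)) :=
  {x ∈ P | ∀ y ∈ P, @inner ℝ _ _ w y ≤ @inner ℝ _ _ w x}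

/-- The support cone of `P` at a face `F`:
`cone(P,F) = {μ(y − x) : y ∈ P, μ ≥ 0}` for `x ∈ relint F`. -/
def supportCone (P F : Set (EuclideanSpace ℝ (Fin 3))) :
    Set (EuclideanSpace ℝ (Fin 3)) :=
  {v | ∃ x ∈ intrinsicInterior ℝ F, ∃ y ∈ P, ∃ μ : ℝ, 0 ≤ μ ∧ v = μ • (y - x)}

/-- `F` is a proper face of the polytope `P`: an exposed face in some unit direction. -/
def IsProperFace (P F : Set (EuclideanSpace ℝ (Fin 3))) : Prop :=
  ∃ w : EuclideanSpace ℝ (Fin 3), ‖w‖ = 1 ∧ F = exposedFace P w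

/-- The face `F` of `P` and the face `G` of `Q` are isothetic:
`G` is a translate of `F` and `cone(P,F) = cone(Q,G)`. -/
def Isothetic (P F Q G : Set (EuclideanSpace ℝ (Fin 3))) : Prop :=
  (∃ t : EuclideanSpace ℝ (Fin 3), G = (t + ·) '' F) ∧ supportCone P F = supportCone Q G

/-- The pairs `(P₁, P₂)` and `(Q₁, Q₂)` are synisothetic: every proper face of `P₁` or of
`P₂` is isothetic to some proper face of `Q₁` or of `Q₂`, and conversely. -/
def Synisothetic (P₁ P₂ Q₁ Q₂ : Set (EuclideanSpace ℝ (Fin 3))) : Prop :=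
  (∀ F, IsProperFace P₁ F →
    ∃ G, (IsProperFace Q₁ G ∧ Isothetic P₁ F Q₁ G) ∨ (IsProperFace Q₂ G ∧ Isothetic P₁ F Q₂ G)) ∧
  (∀ F, IsProperFace P₂ F →
    ∃ G, (IsProperFace Q₁ G ∧ Isothetic P₂ F Q₁ G) ∨ (IsProperFace Q₂ G ∧ Isothetic P₂ F Q₂ G)) ∧
  (∀ G, IsProperFace Q₁ G →
    ∃ F, (IsProperFace P₁ F ∧ Isothetic Q₁ G P₁ F) ∨ (IsProperFace P₂ F ∧ Isothetic Q₁ G P₂ F)) ∧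
  (∀ G, IsProperFace Q₂ G →
    ∃ F, (IsProperFace P₁ F ∧ Isothetic Q₂ G P₁ F) ∨ (IsProperFace P₂ F ∧ Isothetic Q₂ G P₂ F))

/-- A (compact) convex polytope: the convex hull of a finite set. -/
def IsPolytope (P : Set (EuclideanSpace ℝ (Fin 3))) : Prop :=
  ∃ S : Finset (EuclideanSpace ℝ (Fin 3)),
    P = convexHull ℝ (S : Set (EuclideanSpace ℝ (Fin 3)))

/-!
For any sets, the face of a Minkowski sum in a given direction is the sum of the faces of its
summands. A face of a polytope and its support cone determine the directions exposing it, so two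
isothetic faces are exposed by the same directions. Hence, if `(P, Q)` and `(P', Q')` are
synisothetic, then in each direction the two faces of `P'` and `Q'` are translates of those of `P`
and `Q`, up to order, and the face of `P' + Q'` is a translate of that of `P + Q`.

The translation vector does not depend on the direction. A face of a polytope contains the
faces in all nearby directions, as their own faces in those directions, so the translation vector
is locally constant on the punctured dual space, which is connected. By Hahn–Banach,
`P' + Q'` is a translate of `P + Q`. For difference bodies, which are symmetric about the origin,
the translation is trivial.
-/

open Topology

section ExposedFaces

variable {E : Type*} [AddCommGroup E] [Module ℝ E] [TopologicalSpace E]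

lemma toExposed_nonempty {A : Set E} (hA : IsCompact A) (hne : A.Nonempty)
    (l : StrongDual ℝ E) : (l.toExposed A).Nonempty := by
  obtain ⟨x, hx, hmax⟩ := hA.exists_isMaxOn hne l.continuous.continuousOn
  exact ⟨x, hx, hmax⟩

lemma mem_toExposed_of_le {A : Set E} {l : StrongDual ℝ E} {x y : E}
    (hx : x ∈ l.toExposed A) (hy : y ∈ A) (hxy : l x ≤ l y) : y ∈ l.toExposed A :=
  ⟨hy, fun z hz => (hx.2 z hz).trans hxy⟩

lemma toExposed_smul (A : Set E) {c : ℝ} (hc : 0 < c) (l : StrongDual ℝ E) :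
    (c • l).toExposed A = l.toExposed A := by
  ext x
  simp [ContinuousLinearMap.toExposed, hc]

lemma toExposed_add (l : StrongDual ℝ E) (A B : Set E) :
    l.toExposed (A + B) = l.toExposed A + l.toExposed B := by
  ext x
  constructor
  · rintro ⟨⟨a, ha, b, hb, rfl⟩, hmax⟩
    refine ⟨a, ⟨ha, fun y hy => ?_⟩, b, ⟨hb, fun y hy => ?_⟩, rfl⟩
    · simpa using hmax (y + b) (Set.add_mem_add hy hb)
    · simpa using hmax (a + y) (Set.add_mem_add ha hy)
  · rintro ⟨a, ha, b, hb, rfl⟩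
    refine ⟨Set.add_mem_add ha.1 hb.1, ?_⟩
    rintro _ ⟨y, hy, z, hz, rfl⟩
    simpa using add_le_add (ha.2 y hy) (hb.2 z hz)

lemma toExposed_vadd (l : StrongDual ℝ E) (t : E) (A : Set E) :
    l.toExposed (t +ᵥ A) = t +ᵥ l.toExposed A := by
  have toExposed_singleton : l.toExposed {t} = {t} := by
    ext x
    simp +contextual [ContinuousLinearMap.toExposed]
  rw [← Set.singleton_vadd, ← Set.singleton_vadd, vadd_eq_add, vadd_eq_add, toExposed_add,
    toExposed_singleton]

lemma toExposed_toExposed_of_subset {A : Set E} (hA : IsCompact A) {l m : StrongDual ℝ E}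
    (hsub : m.toExposed A ⊆ l.toExposed A) : m.toExposed (l.toExposed A) = m.toExposed A := by
  refine Set.Subset.antisymm (fun x hx => ?_)
    fun x hx => ⟨hsub hx, fun y hy => hx.2 y hy.1⟩
  obtain ⟨z, hz⟩ := toExposed_nonempty hA ⟨x, hx.1.1⟩ m
  exact mem_toExposed_of_le hz hx.1.1 (hx.2 z (hsub hz))

lemma vadd_set_left_injective [SeparatingDual ℝ E] {A : Set E} (hA : IsCompact A)
    (hne : A.Nonempty) : Function.Injective fun t : E => t +ᵥ A := by
  have apply_le : ∀ {s t : E}, t +ᵥ A = s +ᵥ A → ∀ l : StrongDual ℝ E, l t ≤ l s := by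
    intro s t hst l
    obtain ⟨x, hx⟩ := toExposed_nonempty hA hne l
    obtain ⟨y, hy, hxy⟩ : t +ᵥ x ∈ s +ᵥ A := hst ▸ Set.vadd_mem_vadd_set hx.1
    have hl : l s + l y = l t + l x := by simpa using congrArg l hxy
    linarith [hx.2 y hy]
  intro t s hts
  by_contra hts_ne
  obtain ⟨l, hl⟩ := SeparatingDual.exists_separating_of_ne (R := ℝ) hts_ne
  exact hl (le_antisymm (apply_le hts l) (apply_le hts.symm l))

lemma eq_of_mem_orbit_of_neg_eq [SeparatingDual ℝ E] {A B : Set E} (hA : IsCompact A)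
    (hAneg : -A = A) (hBneg : -B = B) (hBA : B ∈ AddAction.orbit E A) : B = A := by
  obtain ⟨t, rfl⟩ := hBA
  obtain rfl | hne := A.eq_empty_or_nonempty
  · exact Set.vadd_set_empty
  have htt : t +ᵥ A = -t +ᵥ A := by
    calc t +ᵥ A = -(t +ᵥ A) := hBneg.symm
      _ = -t +ᵥ -A := by
        simp only [← Set.singleton_vadd, vadd_eq_add, neg_add, Set.neg_singleton]
      _ = -t +ᵥ A := by rw [hAneg]
  have : IsAddTorsionFree E := .of_isTorsionFree ℝ E
  have ht : t = 0 := self_eq_neg.mp (vadd_set_left_injective hA hne htt)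
  simp [ht]

end ExposedFaces

section Translates

variable {E : Type*} [AddCommGroup E] [Module ℝ E] [TopologicalSpace E]
  [IsTopologicalAddGroup E] [ContinuousSMul ℝ E] [LocallyConvexSpace ℝ E]

lemma subset_of_toExposed_subset [Nontrivial (StrongDual ℝ E)] {A B : Set E} (hA : IsCompact A)
    (hB : IsClosed B) (hBconv : Convex ℝ B)
    (h : ∀ l : StrongDual ℝ E, l ≠ 0 → l.toExposed A ⊆ B) : A ⊆ B := by
  intro x hxA
  by_contra hxB
  obtain ⟨b, hb⟩ : B.Nonempty := by
    obtain ⟨l, hl⟩ := exists_ne (0 : StrongDual ℝ E)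
    exact (toExposed_nonempty hA ⟨x, hxA⟩ l).mono (h l hl)
  obtain ⟨l, u, hlu, hux⟩ := geometric_hahn_banach_closed_point hBconv hB hxB
  have hl : l ≠ 0 := by
    rintro rfl
    exact lt_irrefl (0 : ℝ) ((hlu b hb).trans hux)
  obtain ⟨z, hz⟩ := toExposed_nonempty hA ⟨x, hxA⟩ l
  linarith [hlu z (h l hl hz), hz.2 x hxA]

lemma eventually_toExposed_convexHull_subset [T2Space E] {S : Set E} (hS : S.Finite)
    (l : StrongDual ℝ E) :
    ∀ᶠ m in 𝓝 l, m.toExposed (convexHull ℝ S) ⊆ l.toExposed (convexHull ℝ S) := by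
  set K := convexHull ℝ S
  have hK : IsCompact K := hS.isCompact_convexHull (𝕜 := ℝ)
  have hKconv : Convex ℝ K := convex_convexHull ℝ S
  obtain hempty | hne := K.eq_empty_or_nonempty
  · exact .of_forall fun m x hx => by simpa [hempty] using hx.1
  obtain ⟨x, hx⟩ := toExposed_nonempty hK hne l
  have hvertex : ∀ᶠ m : StrongDual ℝ E in 𝓝 l, ∀ s ∈ S, s ∉ l.toExposed K → m s < m x := by
    refine (Filter.eventually_all_finite hS).2 fun s hs => ?_
    by_cases hsl : s ∈ l.toExposed K
    · exact .of_forall fun m hsl' => absurd hsl hsl'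
    have hlt : l s < l x :=
      lt_of_not_ge fun hxs => hsl (mem_toExposed_of_le hx (subset_convexHull ℝ S hs) hxs)
    have happly : ∀ y : E, Continuous fun m : StrongDual ℝ E => m y := fun y => by fun_prop
    filter_upwards [(happly s).continuousAt.eventually_lt (happly x).continuousAt hlt]
      with m hm _ using hm
  filter_upwards [hvertex] with m hm
  have hmK : IsExposed ℝ K (m.toExposed K) := ContinuousLinearMap.toExposed.isExposed
  have hlK : IsExposed ℝ K (l.toExposed K) := ContinuousLinearMap.toExposed.isExposed
  -- By Krein–Milman it suffices to treat the extreme points of the face, which lie in `S`.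
  rw [← closure_convexHull_extremePoints (hmK.isCompact hK) (hmK.convex hKconv)]
  refine closure_minimal (convexHull_min (fun s hs => ?_) (hlK.convex hKconv))
    (hlK.isClosed hK.isClosed)
  have hsS : s ∈ S :=
    extremePoints_convexHull_subset (hmK.isExtreme.extremePoints_subset_extremePoints hs)
  by_contra hsl
  exact (hm s hsS hsl).not_ge (hs.1.2 x hx.1)

lemma eventually_toExposed_eq_vadd [T2Space E] {S T : Set E} (hS : S.Finite) (hT : T.Finite)
    {l : StrongDual ℝ E} {t : E}
    (h : l.toExposed (convexHull ℝ T) = t +ᵥ l.toExposed (convexHull ℝ S)) :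
    ∀ᶠ m in 𝓝 l, m.toExposed (convexHull ℝ T) = t +ᵥ m.toExposed (convexHull ℝ S) := by
  filter_upwards [eventually_toExposed_convexHull_subset hS l,
    eventually_toExposed_convexHull_subset hT l] with m hmS hmT
  rw [← toExposed_toExposed_of_subset (hT.isCompact_convexHull (𝕜 := ℝ)) hmT, h, toExposed_vadd,
    toExposed_toExposed_of_subset (hS.isCompact_convexHull (𝕜 := ℝ)) hmS]

lemma exists_forall_toExposed_eq_vadd [T2Space E] (hE : 1 < Module.rank ℝ (StrongDual ℝ E))
    {S T : Set E} (hS : S.Finite) (hT : T.Finite)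
    (h : ∀ l : StrongDual ℝ E, l ≠ 0 →
      l.toExposed (convexHull ℝ T) ∈ AddAction.orbit E (l.toExposed (convexHull ℝ S))) :
    ∃ t : E, ∀ l : StrongDual ℝ E, l ≠ 0 →
      l.toExposed (convexHull ℝ T) = t +ᵥ l.toExposed (convexHull ℝ S) := by
  have hK : IsCompact (convexHull ℝ S) := hS.isCompact_convexHull (𝕜 := ℝ)
  choose! t ht using h
  obtain hempty | hne := (convexHull ℝ S).eq_empty_or_nonempty
  · refine ⟨0, fun l hl => ?_⟩
    have hface : l.toExposed (convexHull ℝ S) = ∅ := by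
      rw [hempty]
      exact Set.sep_empty _
    simp [← ht l hl, hface]
  have hlocal : ∀ l ∈ ({0}ᶜ : Set (StrongDual ℝ E)), ∀ᶠ m in 𝓝[{0}ᶜ] l, t l = t m := by
    intro l hl
    rw [eventually_nhdsWithin_iff]
    filter_upwards [eventually_toExposed_eq_vadd hS hT (ht l hl).symm] with m hm hm0
    exact vadd_set_left_injective (ContinuousLinearMap.toExposed.isExposed.isCompact hK)
      (toExposed_nonempty hK hne m) (hm.symm.trans (ht m hm0).symm)
  obtain ⟨l₀, hl₀⟩ : ∃ l : StrongDual ℝ E, l ≠ 0 :=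
    (rank_pos_iff_exists_ne_zero (R := ℝ)).mp (zero_lt_one.trans hE)
  refine ⟨t l₀, fun l hl => ?_⟩
  have hconst : t l₀ = t l :=
    (isConnected_compl_singleton_of_one_lt_rank hE 0).isPreconnected.induction₂
      (fun m m' => t m = t m') hlocal (fun _ _ _ _ _ _ => Eq.trans) (fun _ _ _ _ => Eq.symm) hl₀ hl
  rw [hconst]
  exact (ht l hl).symm

theorem convexHull_mem_orbit_of_toExposed_mem_orbit [T2Space E]
    (hE : 1 < Module.rank ℝ (StrongDual ℝ E)) {S T : Set E} (hS : S.Finite) (hT : T.Finite)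
    (h : ∀ l : StrongDual ℝ E, l ≠ 0 →
      l.toExposed (convexHull ℝ T) ∈ AddAction.orbit E (l.toExposed (convexHull ℝ S))) :
    convexHull ℝ T ∈ AddAction.orbit E (convexHull ℝ S) := by
  have : Nontrivial (StrongDual ℝ E) :=
    (rank_pos_iff_nontrivial (R := ℝ)).mp (zero_lt_one.trans hE)
  obtain ⟨t, ht⟩ := exists_forall_toExposed_eq_vadd hE hS hT h
  have hK : IsCompact (t +ᵥ convexHull ℝ S) := (hS.isCompact_convexHull (𝕜 := ℝ)).vadd t
  have hL : IsCompact (convexHull ℝ T) := hT.isCompact_convexHull (𝕜 := ℝ)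
  have hface : ∀ l : StrongDual ℝ E, l ≠ 0 →
      l.toExposed (t +ᵥ convexHull ℝ S) = l.toExposed (convexHull ℝ T) := by
    intro l hl
    rw [toExposed_vadd, ht l hl]
  refine ⟨t, Set.Subset.antisymm ?_ ?_⟩
  · refine subset_of_toExposed_subset hK hL.isClosed (convex_convexHull ℝ T) fun l hl => ?_
    exact (hface l hl).trans_subset (Set.sep_subset _ _)
  · refine subset_of_toExposed_subset hL hK.isClosed ((convex_convexHull ℝ S).vadd t) fun l hl => ?_
    exact (hface l hl).symm.trans_subset (Set.sep_subset _ _)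

end Translates

lemma finrank_strongDual {V : Type*} [NormedAddCommGroup V] [NormedSpace ℝ V]
    [FiniteDimensional ℝ V] : Module.finrank ℝ (StrongDual ℝ V) = Module.finrank ℝ V := by
  rw [← LinearMap.toContinuousLinearMap.finrank_eq]
  exact Subspace.dual_finrank_eq

lemma add_mem_orbit_add_of_pairing {E : Type*} [AddCommGroup E] {A B C D : Set E}
    (hA : C ∈ AddAction.orbit E A ∨ D ∈ AddAction.orbit E A)
    (hB : C ∈ AddAction.orbit E B ∨ D ∈ AddAction.orbit E B)
    (hC : A ∈ AddAction.orbit E C ∨ B ∈ AddAction.orbit E C)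
    (hD : A ∈ AddAction.orbit E D ∨ B ∈ AddAction.orbit E D) :
    C + D ∈ AddAction.orbit E (A + B) := by
  have add_mem : ∀ {X Y Z W : Set E}, Z ∈ AddAction.orbit E X → W ∈ AddAction.orbit E Y →
      Z + W ∈ AddAction.orbit E (X + Y) := by
    rintro X Y _ _ ⟨s, rfl⟩ ⟨t, rfl⟩
    refine ⟨s + t, ?_⟩
    simp only [← Set.singleton_vadd, vadd_eq_add, ← Set.singleton_add_singleton,
      add_add_add_comm]
  have hpair : (C ∈ AddAction.orbit E A ∧ D ∈ AddAction.orbit E B) ∨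
      (D ∈ AddAction.orbit E A ∧ C ∈ AddAction.orbit E B) := by
    simp only [← AddAction.orbit_eq_iff] at hA hB hC hD ⊢
    grind
  obtain ⟨hCA, hDB⟩ | ⟨hDA, hCB⟩ := hpair
  · exact add_mem hCA hDB
  · exact add_comm D C ▸ add_mem hDA hCB

section Polytopes

variable {P Q P' Q' : Set (EuclideanSpace ℝ (Fin 3))}

lemma IsPolytope.isCompact (hP : IsPolytope P) : IsCompact P := by
  obtain ⟨S, rfl⟩ := hP
  exact S.finite_toSet.isCompact_convexHull (𝕜 := ℝ)

lemma IsPolytope.convex (hP : IsPolytope P) : Convex ℝ P := by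
  obtain ⟨S, rfl⟩ := hP
  exact convex_convexHull ℝ _

lemma IsPolytope.neg (hP : IsPolytope P) : IsPolytope (-P) := by
  classical
  obtain ⟨S, rfl⟩ := hP
  exact ⟨-S, by rw [Finset.coe_neg, convexHull_neg]⟩

lemma IsPolytope.add (hP : IsPolytope P) (hQ : IsPolytope Q) : IsPolytope (P + Q) := by
  classical
  obtain ⟨S, rfl⟩ := hP
  obtain ⟨T, rfl⟩ := hQ
  exact ⟨S + T, by rw [Finset.coe_add, convexHull_add]⟩

lemma exposedFace_eq_toExposed (P : Set (EuclideanSpace ℝ (Fin 3)))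
    (w : EuclideanSpace ℝ (Fin 3)) :
    exposedFace P w = (InnerProductSpace.toDual ℝ _ w).toExposed P :=
  rfl

lemma mem_exposedFace_of_le {w x y : EuclideanSpace ℝ (Fin 3)} (hx : x ∈ exposedFace P w)
    (hy : y ∈ P) (hxy : inner ℝ w x ≤ inner ℝ w y) : y ∈ exposedFace P w :=
  mem_toExposed_of_le (l := InnerProductSpace.toDual ℝ _ w) hx hy hxy

lemma inner_eq_of_mem_exposedFace {w x y : EuclideanSpace ℝ (Fin 3)}
    (hx : x ∈ exposedFace P w) (hy : y ∈ exposedFace P w) : inner ℝ w x = inner ℝ w y :=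
  le_antisymm (hy.2 x hx.1) (hx.2 y hy.1)

lemma exists_toExposed_eq_exposedFace {l : StrongDual ℝ (EuclideanSpace ℝ (Fin 3))} (hl : l ≠ 0) :
    ∃ w : EuclideanSpace ℝ (Fin 3), ‖w‖ = 1 ∧ ∀ A, l.toExposed A = exposedFace A w := by
  refine ⟨(InnerProductSpace.toDual ℝ _).symm (‖l‖⁻¹ • l), ?_, fun A => ?_⟩
  · rw [LinearIsometryEquiv.norm_map]
    exact norm_smul_inv_norm hl
  · rw [exposedFace_eq_toExposed, LinearIsometryEquiv.apply_symm_apply,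
      toExposed_smul A (inv_pos.mpr (norm_pos_iff.mpr hl))]

lemma inner_nonpos_of_mem_supportCone {w v : EuclideanSpace ℝ (Fin 3)}
    (hv : v ∈ supportCone P (exposedFace P w)) : inner ℝ w v ≤ 0 := by
  obtain ⟨x, hx, y, hy, μ, hμ, rfl⟩ := hv
  rw [inner_smul_right, inner_sub_right]
  exact mul_nonpos_of_nonneg_of_nonpos hμ
    (sub_nonpos.mpr ((intrinsicInterior_subset hx).2 y hy))

lemma exists_eq_smul_sub_of_mem_supportCone {w v : EuclideanSpace ℝ (Fin 3)}
    (hv : v ∈ supportCone P (exposedFace P w)) (hwv : inner ℝ w v = 0) :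
    ∃ x ∈ exposedFace P w, ∃ y ∈ exposedFace P w, ∃ μ : ℝ, v = μ • (y - x) := by
  obtain ⟨x, hx, y, hy, μ, -, rfl⟩ := hv
  have hxF := intrinsicInterior_subset hx
  obtain rfl | hμ := eq_or_ne μ 0
  · exact ⟨x, hxF, x, hxF, 0, by simp⟩
  have hxy : inner ℝ w y = inner ℝ w x := by
    simpa [inner_smul_right, inner_sub_right, hμ, sub_eq_zero] using hwv
  exact ⟨x, hxF, y, mem_exposedFace_of_le hxF hy hxy.ge, μ, rfl⟩

lemma exists_forall_sub_mem_supportCone (hP : IsPolytope P) (hne : P.Nonempty)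
    (w : EuclideanSpace ℝ (Fin 3)) :
    ∃ x ∈ exposedFace P w, ∀ y ∈ P, y - x ∈ supportCone P (exposedFace P w) := by
  have hFne : (exposedFace P w).Nonempty :=
    toExposed_nonempty hP.isCompact hne (InnerProductSpace.toDual ℝ _ w)
  have hFconv : Convex ℝ (exposedFace P w) :=
    (ContinuousLinearMap.toExposed.isExposed (l := InnerProductSpace.toDual ℝ _ w)).convex hP.convex
  obtain ⟨x, hx⟩ := hFne.intrinsicInterior hFconv
  exact ⟨x, intrinsicInterior_subset hx, fun y hy =>
    ⟨x, hx, y, hy, 1, zero_le_one, (one_smul ℝ _).symm⟩⟩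

lemma Isothetic.exposedFace_eq {w u : EuclideanSpace ℝ (Fin 3)} (hQ : IsPolytope Q)
    (h : Isothetic P (exposedFace P w) Q (exposedFace Q u)) :
    exposedFace Q w = exposedFace Q u := by
  obtain ⟨⟨t, ht⟩, hcone⟩ := h
  obtain rfl | hne := Q.eq_empty_or_nonempty
  · simp [exposedFace]
  obtain ⟨x, hxu, hsub⟩ := exists_forall_sub_mem_supportCone hQ hne u
  rw [← hcone] at hsub
  have hxw : x ∈ exposedFace Q w := by
    refine ⟨hxu.1, fun y hy => ?_⟩
    simpa [inner_sub_right] using inner_nonpos_of_mem_supportCone (hsub y hy)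
  refine Set.Subset.antisymm (fun y hy => ?_) (fun y hy => ?_)
  · have hwyx : inner ℝ w (y - x) = 0 := by
      rw [inner_sub_right, sub_eq_zero]
      exact inner_eq_of_mem_exposedFace hy hxw
    -- `y - x` is parallel to the face of `P`, hence to its translate, on which `u` is constant.
    obtain ⟨p, hp, q, hq, μ, hyx⟩ := exists_eq_smul_sub_of_mem_supportCone (hsub y hy.1) hwyx
    have htp : t + p ∈ exposedFace Q u := ht ▸ Set.mem_image_of_mem _ hp
    have htq : t + q ∈ exposedFace Q u := ht ▸ Set.mem_image_of_mem _ hq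
    have hpq : inner ℝ u p = inner ℝ u q := by
      simpa [inner_add_right] using inner_eq_of_mem_exposedFace htp htq
    have huyx : inner ℝ u (y - x) = 0 := by
      rw [hyx, inner_smul_right, inner_sub_right, hpq, sub_self, mul_zero]
    rw [inner_sub_right, sub_eq_zero] at huyx
    exact mem_exposedFace_of_le hxu hy.1 huyx.ge
  · obtain ⟨p, hp, rfl⟩ := ht ▸ hy
    obtain ⟨q, hq, rfl⟩ := ht ▸ hxu
    have hpq : inner ℝ w q = inner ℝ w p := inner_eq_of_mem_exposedFace hq hp
    exact mem_exposedFace_of_le hxw hy.1 (by simp [inner_add_right, hpq])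

lemma Isothetic.exposedFace_mem_orbit {G : Set (EuclideanSpace ℝ (Fin 3))}
    {w : EuclideanSpace ℝ (Fin 3)} (hQ : IsPolytope Q) (hG : IsProperFace Q G)
    (h : Isothetic P (exposedFace P w) Q G) :
    exposedFace Q w ∈ AddAction.orbit (EuclideanSpace ℝ (Fin 3)) (exposedFace P w) := by
  obtain ⟨u, -, rfl⟩ := hG
  obtain ⟨t, ht⟩ := h.1
  exact ⟨t, ((h.exposedFace_eq hQ).trans ht).symm⟩

lemma exposedFace_mem_orbit_or (hP' : IsPolytope P') (hQ' : IsPolytope Q')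
    (h : ∀ F, IsProperFace P F → ∃ G, (IsProperFace P' G ∧ Isothetic P F P' G) ∨
      (IsProperFace Q' G ∧ Isothetic P F Q' G))
    {w : EuclideanSpace ℝ (Fin 3)} (hw : ‖w‖ = 1) :
    exposedFace P' w ∈ AddAction.orbit (EuclideanSpace ℝ (Fin 3)) (exposedFace P w) ∨
      exposedFace Q' w ∈ AddAction.orbit (EuclideanSpace ℝ (Fin 3)) (exposedFace P w) := by
  obtain ⟨G, ⟨hG, hFG⟩ | ⟨hG, hFG⟩⟩ := h _ ⟨w, hw, rfl⟩
  · exact .inl (Isothetic.exposedFace_mem_orbit hP' hG hFG)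
  · exact .inr (Isothetic.exposedFace_mem_orbit hQ' hG hFG)

lemma Synisothetic.exposedFace_add_mem_orbit (hP : IsPolytope P) (hQ : IsPolytope Q)
    (hP' : IsPolytope P') (hQ' : IsPolytope Q') (h : Synisothetic P Q P' Q')
    {w : EuclideanSpace ℝ (Fin 3)} (hw : ‖w‖ = 1) :
    exposedFace (P' + Q') w ∈
      AddAction.orbit (EuclideanSpace ℝ (Fin 3)) (exposedFace (P + Q) w) := by
  obtain ⟨hPface, hQface, hP'face, hQ'face⟩ := h
  simp only [exposedFace_eq_toExposed, toExposed_add]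
  exact add_mem_orbit_add_of_pairing (exposedFace_mem_orbit_or hP' hQ' hPface hw)
    (exposedFace_mem_orbit_or hP' hQ' hQface hw) (exposedFace_mem_orbit_or hP hQ hP'face hw)
    (exposedFace_mem_orbit_or hP hQ hQ'face hw)

theorem Synisothetic.add_mem_orbit (hP : IsPolytope P) (hQ : IsPolytope Q)
    (hP' : IsPolytope P') (hQ' : IsPolytope Q') (h : Synisothetic P Q P' Q') :
    P' + Q' ∈ AddAction.orbit (EuclideanSpace ℝ (Fin 3)) (P + Q) := by
  obtain ⟨S, hS⟩ := hP.add hQ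
  obtain ⟨T, hT⟩ := hP'.add hQ'
  have hrank : 1 < Module.rank ℝ (StrongDual ℝ (EuclideanSpace ℝ (Fin 3))) := by
    apply Module.one_lt_rank_of_one_lt_finrank
    rw [finrank_strongDual, finrank_euclideanSpace_fin]
    norm_num
  rw [hS, hT]
  refine convexHull_mem_orbit_of_toExposed_mem_orbit hrank S.finite_toSet T.finite_toSet
    fun l hl => ?_
  obtain ⟨w, hw, hlw⟩ := exists_toExposed_eq_exposedFace hl
  rw [← hS, ← hT, hlw, hlw]
  exact h.exposedFace_add_mem_orbit hP hQ hP' hQ' hw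

theorem synisothetic_implies_equal_difference_bodies_general
    (hP : IsPolytope P) (hP' : IsPolytope P') (hsyn : Synisothetic P (-P) P' (-P')) :
    P + (-P) = P' + (-P') := by
  have neg_add_neg : ∀ A : Set (EuclideanSpace ℝ (Fin 3)), -(A + -A) = A + -A := fun A => by
    rw [neg_add, neg_neg, add_comm]
  exact (eq_of_mem_orbit_of_neg_eq (hP.isCompact.add hP.neg.isCompact) (neg_add_neg P)
    (neg_add_neg P') (hsyn.add_mem_orbit hP hP.neg hP' hP'.neg)).symm

end Polytopes

/-- If `(P, −P)` and `(P', −P')` are synisothetic pairs of convex polytopes in `ℝ³` with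
non-empty interior, then the difference bodies `DP = P + (−P)` and `DP' = P' + (−P')`
coincide. -/
theorem synisothetic_implies_equal_difference_bodies
    (P P' : Set (EuclideanSpace ℝ (Fin 3)))
    (hP : IsPolytope P) (hP' : IsPolytope P')
    (hPint : (interior P).Nonempty) (hP'int : (interior P').Nonempty)
    (hsyn : Synisothetic P (-P) P' (-P')) :
    P + (-P) = P' + (-P') :=
  synisothetic_implies_equal_difference_bodies_general hP hP' hsyn
end

section
/- Let K ⊂ ℝⁿ be a convex body and let K = K₁ ⊕ … ⊕ K_s be its representation in terms of directly indecomposable convex bodies, with K_i contained in a linear subspace E_i and E₁ ⊕ … ⊕ E_s = ℝⁿ. If L is a convex body with g_K = g_L, then L = L₁ ⊕ … ⊕ L_s, where for each i, L_i is a directly indecomposable convex body contained in E_i and g_{K_i} = g_{L_i}. -/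
open MeasureTheory Pointwise

/-- The covariogram of a set `K ⊆ ℝⁿ`: `g_K(x) = λ_n(K ∩ (K + x))`. -/
noncomputable def covariogram {n : ℕ} (K : Set (EuclideanSpace ℝ (Fin n)))
    (x : EuclideanSpace ℝ (Fin n)) : ℝ :=
  (volume (K ∩ ((x + ·) '' K))).toReal

/-- The covariogram of a (possibly lower-dimensional) convex set, computed with Lebesgue
(Hausdorff) measure of the dimension of the set within its affine hull. -/
noncomputable def covariogramDim {n : ℕ} (K : Set (EuclideanSpace ℝ (Fin n)))
    (x : EuclideanSpace ℝ (Fin n)) : ℝ :=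
  (μH[(Module.finrank ℝ (vectorSpan ℝ K) : ℝ)] (K ∩ ((x + ·) '' K))).toReal

/-- A convex body `K` is directly indecomposable if in every representation `K = L ⊕ M`
(i.e. `K = L + M` with `L`, `M` compact convex non-empty sets lying in complementary
linear subspaces), one of the summands has dimension `0`. -/
def IsDirectlyIndecomposable {n : ℕ} (K : Set (EuclideanSpace ℝ (Fin n))) : Prop :=
  ∀ (L M : Set (EuclideanSpace ℝ (Fin n))) (E₁ E₂ : Submodule ℝ (EuclideanSpace ℝ (Fin n))),
    IsCompl E₁ E₂ →
    L ⊆ (E₁ : Set (EuclideanSpace ℝ (Fin n))) → M ⊆ (E₂ : Set (EuclideanSpace ℝ (Fin n))) →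
    Convex ℝ L → IsCompact L → L.Nonempty →
    Convex ℝ M → IsCompact M → M.Nonempty →
    K = L + M →
    Module.finrank ℝ (vectorSpan ℝ L) = 0 ∨ Module.finrank ℝ (vectorSpan ℝ M) = 0

/-!
The covariogram of a convex body `K` is positive exactly on the interior of `K - K`, so
`g_K = g_L` forces `K - K = L - L`. By Hahn–Banach, a convex body is the sum of its projections
along a direct sum as soon as its difference body is. Hence `L` splits along every decomposition of
`K`, into bodies `L_i` with `L_i - L_i = K_i - K_i`, and by the same token `K_i` and `L_i` split
along the same direct sums.

Up to a constant factor the volume on the direct sum is the product of the volumes on the `E_i`, so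
covariograms multiply. Setting all coordinates but the `i`-th to `0` gives `a g_{K_i} = b g_{L_i}`
with constants `a, b > 0`. As `g(0)` is the volume and `∫ g` is the square of the volume, `a = b`.
-/

open Module Set
open scoped ENNReal

section SumsOfSets

theorem subset_sum_image {R V ι : Type*} [Semiring R] [AddCommMonoid V] [Module R V] [Fintype ι]
    {P : ι → V →ₗ[R] V} (hP : ∀ x, ∑ i, P i x = x) (S : Set V) : S ⊆ ∑ i, P i '' S := fun x hx =>
  (mem_fintype_sum _ _).2 ⟨fun i => P i x, fun _ => mem_image_of_mem _ hx, hP x⟩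

/-- The linear isomorphism from the external to the internal direct sum of a finite family `E` of
submodules. -/
noncomputable def internalPiEquiv {R V ι : Type*} [Semiring R] [AddCommMonoid V] [Module R V]
    [Fintype ι] [DecidableEq ι] {E : ι → Submodule R V} (hE : DirectSum.IsInternal E) :
    (∀ i, E i) ≃ₗ[R] V :=
  (DirectSum.linearEquivFunOnFintype R ι fun i => E i).symm ≪≫ₗ
    LinearEquiv.ofBijective (DirectSum.coeLinearMap E) hE

/-- The projection of the internal direct sum of the submodules `E j` onto its summand `E i`, as an
endomorphism of the whole module. -/
noncomputable def internalProj {R V ι : Type*} [Semiring R] [AddCommMonoid V] [Module R V]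
    [Fintype ι] [DecidableEq ι] {E : ι → Submodule R V} (hE : DirectSum.IsInternal E) (i : ι) :
    V →ₗ[R] V :=
  (E i).subtype ∘ₗ LinearMap.proj i ∘ₗ (internalPiEquiv hE).symm.toLinearMap

variable {R V ι : Type*} [Semiring R] [AddCommMonoid V] [Module R V] [Fintype ι] [DecidableEq ι]
  {E : ι → Submodule R V} (hE : DirectSum.IsInternal E)

theorem internalPiEquiv_apply (y : ∀ i, E i) : internalPiEquiv hE y = ∑ i, (y i : V) := by
  conv_lhs => rw [← Finset.univ_sum_single y, map_sum]
  refine Finset.sum_congr rfl fun i _ => ?_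
  rw [internalPiEquiv, LinearEquiv.trans_apply, DirectSum.linearEquivFunOnFintype_symm_single]
  exact DirectSum.coeLinearMap_lof E i (y i)

theorem internalProj_mem (i : ι) (x : V) : internalProj hE i x ∈ E i :=
  ((internalPiEquiv hE).symm x i).2

theorem sum_internalProj (x : V) : ∑ i, internalProj hE i x = x :=
  (internalPiEquiv_apply hE _).symm.trans ((internalPiEquiv hE).apply_symm_apply x)

theorem internalProj_sum {g : ι → V} (hg : ∀ i, g i ∈ E i) (i : ι) :
    internalProj hE i (∑ j, g j) = g i := by
  have hsum : ∑ j, g j = internalPiEquiv hE fun j => ⟨g j, hg j⟩ :=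
    (internalPiEquiv_apply hE fun j => ⟨g j, hg j⟩).symm
  simp [internalProj, hsum]

theorem internalProj_of_mem {i : ι} {x : V} (hx : x ∈ E i) : internalProj hE i x = x := by
  have hmem : ∀ j, Pi.single (M := fun _ => V) i x j ∈ E j := fun j => by
    obtain rfl | hj := eq_or_ne j i
    · simpa using hx
    · simp [hj]
  simpa using internalProj_sum hE hmem i

theorem internalProj_image_sum {A : ι → Set V} (hA : ∀ i, A i ⊆ E i)
    (hne : (∑ i, A i).Nonempty) (i : ι) : internalProj hE i '' (∑ j, A j) = A i := by
  simp only [← image_fintype_sum_pi] at hne ⊢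
  obtain ⟨_, g, hg, -⟩ := hne
  apply Subset.antisymm
  · rintro _ ⟨_, ⟨f, hf, rfl⟩, rfl⟩
    rw [internalProj_sum hE fun j => hA j (hf j trivial)]
    exact hf i trivial
  · intro x hx
    have hupdate : Function.update g i x ∈ univ.pi A := update_mem_pi_iff_of_mem hg |>.2 fun _ => hx
    refine ⟨_, ⟨_, hupdate, rfl⟩, ?_⟩
    rw [internalProj_sum hE fun j => hA j (hupdate j trivial), Function.update_self]

theorem internalPiEquiv_image_univ_pi {A : ι → Set V} (hA : ∀ i, A i ⊆ E i) :
    internalPiEquiv hE '' univ.pi (fun i => ((↑) ⁻¹' A i : Set (E i))) = ∑ i, A i := by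
  rw [← image_fintype_sum_pi]
  ext x
  constructor
  · rintro ⟨y, hy, rfl⟩
    exact ⟨fun i => y i, hy, (internalPiEquiv_apply hE y).symm⟩
  · rintro ⟨g, hg, rfl⟩
    exact ⟨fun i => ⟨g i, hA i (hg i trivial)⟩, hg, internalPiEquiv_apply hE _⟩

end SumsOfSets

section DifferenceBodies

theorem vectorSpan_eq_of_sub_self_eq {R V : Type*} [Ring R] [AddCommGroup V] [Module R V]
    {A B : Set V} (h : A - A = B - B) : vectorSpan R A = vectorSpan R B :=
  congrArg (Submodule.span R) h

theorem closure_interior_sub_interior {V : Type*} [AddCommGroup V] [Module ℝ V]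
    [TopologicalSpace V] [IsTopologicalAddGroup V] [ContinuousSMul ℝ V] [T2Space V] {A : Set V}
    (hconv : Convex ℝ A) (hcomp : IsCompact A) (hint : (interior A).Nonempty) :
    closure (interior A - interior A) = A - A := by
  have hclosure : closure (interior A) = A := by
    rw [hconv.closure_interior_eq_closure_of_nonempty_interior hint, hcomp.isClosed.closure_eq]
  apply Subset.antisymm
  · refine closure_minimal (sub_subset_sub interior_subset interior_subset) ?_
    exact (sub_eq_add_neg A A ▸ hcomp.add hcomp.neg : IsCompact (A - A)).isClosed
  · rintro _ ⟨x, hx, y, hy, rfl⟩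
    rw [← hclosure] at hx hy
    exact map_mem_closure₂ continuous_sub hx hy fun _ ha _ hb => sub_mem_sub ha hb

theorem vectorSpan_eq_of_vectorSpan_sum_eq_top {R V ι : Type*} [Ring R] [AddCommGroup V]
    [Module R V] [Fintype ι] [DecidableEq ι] {E : ι → Submodule R V} (hE : DirectSum.IsInternal E)
    {A : ι → Set V} (hA : ∀ i, A i ⊆ E i) (hne : (∑ i, A i).Nonempty)
    (hspan : vectorSpan R (∑ i, A i) = ⊤) (i : ι) : vectorSpan R (A i) = E i := by
  have hmap : vectorSpan R (A i) = LinearMap.range (internalProj hE i) := by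
    rw [LinearMap.range_eq_map, ← hspan]
    conv_lhs => rw [← internalProj_image_sum hE hA hne i]
    exact ((internalProj hE i).toAffineMap.map_vectorSpan).symm
  rw [hmap]
  apply le_antisymm
  · rintro _ ⟨x, rfl⟩
    exact internalProj_mem hE i x
  · exact fun x hx => ⟨x, internalProj_of_mem hE hx⟩

/- A point `x = ∑ P i (l i)` with `l i ∈ L` lying outside `L` would be separated from `L` by some
functional `f`. With `a i` and `b i` maximizing and minimizing `f ∘ P i` on `L`, the point
`∑ P i (a i - b i)` of `L - L` is some `p - q`, and then `f p ≥ ∑ f (P i (a i)) ≥ f x`. -/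
theorem eq_sum_image_of_sub_self_eq_sum_image {V ι : Type*} [AddCommGroup V] [Module ℝ V]
    [TopologicalSpace V] [IsTopologicalAddGroup V] [ContinuousSMul ℝ V] [LocallyConvexSpace ℝ V]
    [T2Space V] [Fintype ι] {P : ι → V →ₗ[ℝ] V} (hPcont : ∀ i, Continuous (P i))
    (hP : ∀ x, ∑ i, P i x = x) {L : Set V} (hconv : Convex ℝ L) (hcomp : IsCompact L)
    (hne : L.Nonempty) (hsub : L - L = ∑ i, P i '' (L - L)) : L = ∑ i, P i '' L := by
  refine (subset_sum_image hP L).antisymm fun x hx => ?_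
  obtain ⟨y, hy, rfl⟩ := (mem_fintype_sum _ _).1 hx
  by_contra hxL
  obtain ⟨f, u, hfL, hfx⟩ := geometric_hahn_banach_closed_point hconv hcomp.isClosed hxL
  have hcont : ∀ i, ContinuousOn (fun z => f (P i z)) L := fun i =>
    (f.continuous.comp (hPcont i)).continuousOn
  choose a haL hmax using fun i => hcomp.exists_isMaxOn hne (hcont i)
  choose b hbL hmin using fun i => hcomp.exists_isMinOn hne (hcont i)
  have hab : ∑ i, P i (a i - b i) ∈ L - L := hsub ▸ (mem_fintype_sum _ _).2
    ⟨_, fun i => mem_image_of_mem _ (sub_mem_sub (haL i) (hbL i)), rfl⟩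
  obtain ⟨p, hp, q, hq, hpq⟩ := mem_sub.1 hab
  have hfpq : f p - f q = ∑ i, f (P i (a i)) - ∑ i, f (P i (b i)) := by
    rw [← map_sub, hpq]
    simp only [map_sub, map_sum, Finset.sum_sub_distrib]
  have hfq : ∑ i, f (P i (b i)) ≤ f q := calc
    ∑ i, f (P i (b i)) ≤ ∑ i, f (P i q) := Finset.sum_le_sum fun i _ => hmin i hq
    _ = f q := by rw [← map_sum, hP]
  have hfy : f (∑ i, y i) ≤ ∑ i, f (P i (a i)) := by
    rw [map_sum]
    refine Finset.sum_le_sum fun i _ => ?_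
    obtain ⟨l, hl, hly⟩ := hy i
    exact hly ▸ hmax i hl
  linarith [hfL p hp]

theorem exists_eq_sum_of_sub_self_eq_sum_sub_self {V ι : Type*} [NormedAddCommGroup V]
    [NormedSpace ℝ V] [FiniteDimensional ℝ V] [Fintype ι] [DecidableEq ι] {E : ι → Submodule ℝ V}
    (hE : DirectSum.IsInternal E) {A : ι → Set V} (hA : ∀ i, A i ⊆ E i) {L : Set V}
    (hconv : Convex ℝ L) (hcomp : IsCompact L) (hne : L.Nonempty)
    (hsub : (∑ i, A i) - ∑ i, A i = L - L) :
    ∃ B : ι → Set V, (∀ i, Convex ℝ (B i) ∧ IsCompact (B i) ∧ (B i).Nonempty ∧ B i ⊆ E i ∧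
      A i - A i = B i - B i) ∧ L = ∑ i, B i := by
  have hneA : (∑ i, A i).Nonempty := (hsub ▸ hne.sub hne).of_sub_left
  have himage : ∀ i, internalProj hE i '' (L - L) = A i - A i := fun i => by
    rw [← hsub, image_sub, internalProj_image_sum hE hA hneA]
  have hcont : ∀ i, Continuous (internalProj hE i) := fun i =>
    (internalProj hE i).continuous_of_finiteDimensional
  refine ⟨fun i => internalProj hE i '' L, fun i => ⟨hconv.linear_image _,
    hcomp.image (hcont i), hne.image _, ?_, by rw [← himage, image_sub]⟩,
    eq_sum_image_of_sub_self_eq_sum_image hcont (sum_internalProj hE) hconv hcomp hne ?_⟩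
  · rintro _ ⟨x, -, rfl⟩
    exact internalProj_mem hE i x
  · simp only [himage, Finset.sum_sub_distrib, hsub]

theorem IsDirectlyIndecomposable.of_sub_self_eq {n : ℕ} {K L : Set (EuclideanSpace ℝ (Fin n))}
    (hK : IsDirectlyIndecomposable K) (hconv : Convex ℝ K) (hcomp : IsCompact K)
    (hne : K.Nonempty) (hsub : K - K = L - L) : IsDirectlyIndecomposable L := by
  intro A₁ A₂ E₁ E₂ hE hA₁ hA₂ _ _ _ _ _ _ rfl
  have hinternal : DirectSum.IsInternal ![E₁, E₂] :=
    (DirectSum.isInternal_submodule_iff_isCompl _ zero_ne_one (by ext i; fin_cases i <;> simp)).2 hE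
  have hA : ∀ i, (![A₁, A₂] i) ⊆ (![E₁, E₂] i : Set _) := Fin.forall_fin_two.2 ⟨hA₁, hA₂⟩
  obtain ⟨B, hB, hKB⟩ := exists_eq_sum_of_sub_self_eq_sum_sub_self hinternal hA hconv hcomp hne
    (by simpa [Fin.sum_univ_two] using hsub.symm)
  obtain ⟨⟨hconv₁, hcomp₁, hne₁, hBE₁, hsub₁⟩, hconv₂, hcomp₂, hne₂, hBE₂, hsub₂⟩ :=
    Fin.forall_fin_two.1 hB
  have h := hK (B 0) (B 1) E₁ E₂ hE hBE₁ hBE₂ hconv₁ hcomp₁ hne₁ hconv₂ hcomp₂ hne₂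
    (hKB.trans (Fin.sum_univ_two B))
  rwa [← vectorSpan_eq_of_sub_self_eq hsub₁, ← vectorSpan_eq_of_sub_self_eq hsub₂] at h

end DifferenceBodies

section Covariogram

/-- The covariogram `x ↦ μ (A ∩ (x + A))` of `A` with respect to a measure `μ`, with values in
`[0, ∞]`. For the volume on `ℝⁿ`, its `ENNReal.toReal` is `covariogram`. -/
noncomputable def ecovariogram {G : Type*} [AddGroup G] [MeasurableSpace G] (μ : Measure G)
    (A : Set G) (x : G) : ℝ≥0∞ :=
  μ (A ∩ (x +ᵥ A))

section AddGroup

variable {G : Type*} [AddGroup G] [MeasurableSpace G] {μ : Measure G} {A B : Set G}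

@[simp]
theorem ecovariogram_zero (μ : Measure G) (A : Set G) : ecovariogram μ A 0 = μ A := by
  simp [ecovariogram]

theorem ecovariogram_ne_top (hA : μ A ≠ ∞) (x : G) : ecovariogram μ A x ≠ ∞ :=
  measure_ne_top_of_subset inter_subset_left hA

variable [MeasurableAdd₂ G] [μ.IsAddLeftInvariant]

theorem ecovariogram_eq_measure_setOf (A : Set G) (x : G) :
    ecovariogram μ A x = μ {w | x + w ∈ A ∧ w ∈ A} := by
  rw [ecovariogram, ← measure_preimage_add μ x, preimage_inter]
  congr 2
  exact preimage_image_eq A (add_right_injective x)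

variable [SFinite μ]

theorem measurable_ecovariogram (hA : MeasurableSet A) : Measurable (ecovariogram μ A) := by
  simp only [funext (ecovariogram_eq_measure_setOf (μ := μ) A)]
  exact measurable_measure_prodMk_left ((hA.prod hA).preimage
    (measurable_add.prodMk measurable_snd))

variable [μ.IsAddRightInvariant]

theorem lintegral_ecovariogram (hA : MeasurableSet A) :
    ∫⁻ x, ecovariogram μ A x ∂μ = μ A * μ A := by
  have hpres := measurePreserving_add_prod μ μ
  rw [← Measure.prod_prod, ← hpres.measure_preimage (hA.prod hA).nullMeasurableSet,
    Measure.prod_apply (hpres.measurable (hA.prod hA))]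
  exact lintegral_congr fun x => ecovariogram_eq_measure_setOf A x

/- Evaluating the hypothesis at `0` and integrating it give `a μ(A) = b μ(B)` and
`a μ(A)² = b μ(B)²`. -/
theorem ecovariogram_eq_of_const_mul_eq (hA : MeasurableSet A) (hB : MeasurableSet B)
    (hA_zero : μ A ≠ 0) (hA_top : μ A ≠ ∞) {a b : ℝ≥0∞} (ha_zero : a ≠ 0) (ha_top : a ≠ ∞)
    (h : ∀ x, a * ecovariogram μ A x = b * ecovariogram μ B x) :
    ecovariogram μ A = ecovariogram μ B := by
  have hvalue : a * μ A = b * μ B := by simpa using h 0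
  have hintegral : a * (μ A * μ A) = b * (μ B * μ B) := by
    rw [← lintegral_ecovariogram hA, ← lintegral_ecovariogram hB,
      ← lintegral_const_mul _ (measurable_ecovariogram hA),
      ← lintegral_const_mul _ (measurable_ecovariogram hB)]
    exact lintegral_congr h
  have hAB : μ A = μ B := by
    rw [← mul_assoc, ← mul_assoc, ← hvalue] at hintegral
    exact (ENNReal.mul_right_inj (mul_ne_zero ha_zero hA_zero)
      (ENNReal.mul_ne_top ha_top hA_top)).1 hintegral
  obtain rfl : a = b := (ENNReal.mul_left_inj hA_zero hA_top).1 (hAB ▸ hvalue)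
  exact funext fun x => (ENNReal.mul_right_inj ha_zero ha_top).1 (h x)

end AddGroup

theorem ecovariogram_eq_of_prod_eq {ι : Type*} [Fintype ι] {G : ι → Type*}
    [∀ i, AddGroup (G i)] [∀ i, MeasurableSpace (G i)] [∀ i, MeasurableAdd₂ (G i)]
    {μ : ∀ i, Measure (G i)} [∀ i, SFinite (μ i)]
    [∀ i, (μ i).IsAddLeftInvariant] [∀ i, (μ i).IsAddRightInvariant] {A B : ∀ i, Set (G i)}
    (hA : ∀ i, MeasurableSet (A i)) (hB : ∀ i, MeasurableSet (B i)) (hA_zero : ∀ i, μ i (A i) ≠ 0)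
    (hA_top : ∀ i, μ i (A i) ≠ ∞)
    (h : ∀ y : ∀ i, G i,
      ∏ i, ecovariogram (μ i) (A i) (y i) = ∏ i, ecovariogram (μ i) (B i) (y i)) (i : ι) :
    ecovariogram (μ i) (A i) = ecovariogram (μ i) (B i) := by
  classical
  have hsingle : ∀ (C : ∀ i, Set (G i)) (x : G i),
      ∏ j, ecovariogram (μ j) (C j) (Pi.single (M := G) i x j) =
        (∏ j ∈ Finset.univ.erase i, μ j (C j)) * ecovariogram (μ i) (C i) x := fun C x => by
    rw [← Finset.prod_erase_mul _ _ (Finset.mem_univ i), Pi.single_eq_same]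
    refine congrArg (· * _) (Finset.prod_congr rfl fun j hj => ?_)
    rw [Pi.single_eq_of_ne (Finset.ne_of_mem_erase hj), ecovariogram_zero]
  refine ecovariogram_eq_of_const_mul_eq (a := ∏ j ∈ Finset.univ.erase i, μ j (A j))
    (b := ∏ j ∈ Finset.univ.erase i, μ j (B j)) (hA i) (hB i) (hA_zero i) (hA_top i)
    (Finset.prod_ne_zero_iff.2 fun j _ => hA_zero j) (ENNReal.prod_ne_top fun j _ => hA_top j)
    fun x => ?_
  rw [← hsingle A x, h, hsingle B x]

section Convex

variable {V : Type*} [NormedAddCommGroup V] [NormedSpace ℝ V] [FiniteDimensional ℝ V]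
  [MeasurableSpace V] [BorelSpace V] {μ : Measure V} [μ.IsAddHaarMeasure] {A B : Set V}

theorem addHaar_ne_zero_iff_interior_nonempty (hA : Convex ℝ A) :
    μ A ≠ 0 ↔ (interior A).Nonempty := by
  refine ⟨fun h => ?_, fun h => (Measure.measure_pos_of_nonempty_interior μ h).ne'⟩
  by_contra hempty
  refine h (measure_mono_null ?_ (hA.addHaar_frontier μ))
  rw [frontier, not_nonempty_iff_eq_empty.1 hempty, sdiff_empty]
  exact subset_closure

theorem ecovariogram_ne_zero_iff (hA : Convex ℝ A) (x : V) :
    ecovariogram μ A x ≠ 0 ↔ x ∈ interior A - interior A := by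
  rw [ecovariogram, addHaar_ne_zero_iff_interior_nonempty (hA.inter (hA.vadd x)), interior_inter,
    interior_vadd, inter_comm, vadd_inter_nonempty_iff', mem_sub]
  tauto

theorem sub_self_eq_of_ecovariogram_eq (hA : Convex ℝ A) (hAcomp : IsCompact A)
    (hAint : (interior A).Nonempty) (hB : Convex ℝ B) (hBcomp : IsCompact B)
    (h : ecovariogram μ A = ecovariogram μ B) : A - A = B - B := by
  have hint : interior A - interior A = interior B - interior B := by
    ext x
    rw [← ecovariogram_ne_zero_iff (μ := μ) hA, ← ecovariogram_ne_zero_iff (μ := μ) hB, h]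
  have hBint : (interior B).Nonempty := (hint ▸ hAint.sub hAint).of_sub_left
  rw [← closure_interior_sub_interior hA hAcomp hAint,
    ← closure_interior_sub_interior hB hBcomp hBint, hint]

end Convex

end Covariogram

section DirectSums

theorem exists_ecovariogram_image_univ_pi_eq {V ι : Type*} [NormedAddCommGroup V]
    [NormedSpace ℝ V] [MeasurableSpace V] [BorelSpace V] [Fintype ι] {F : ι → Type*}
    [∀ i, NormedAddCommGroup (F i)] [∀ i, NormedSpace ℝ (F i)] [∀ i, FiniteDimensional ℝ (F i)]
    [∀ i, MeasurableSpace (F i)] [∀ i, BorelSpace (F i)] (μ : Measure V) [μ.IsAddHaarMeasure]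
    (ν : ∀ i, Measure (F i)) [∀ i, (ν i).IsAddHaarMeasure] (e : (∀ i, F i) ≃L[ℝ] V) :
    ∃ c : ℝ≥0∞, c ≠ 0 ∧ c ≠ ∞ ∧ ∀ (A : ∀ i, Set (F i)) (y : ∀ i, F i),
      ecovariogram μ (e '' univ.pi A) (e y) = c * ∏ i, ecovariogram (ν i) (A i) (y i) := by
  have hhaar : (μ.map e.symm).IsAddHaarMeasure := e.symm.isAddHaarMeasure_map μ
  have hscalar := Measure.isAddLeftInvariant_eq_smul (μ.map e.symm) (Measure.pi ν)
  refine ⟨(μ.map e.symm).addHaarScalarFactor (Measure.pi ν),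
    ENNReal.coe_ne_zero.2 (Measure.addHaarScalarFactor_pos_of_isAddHaarMeasure _ _).ne',
    ENNReal.coe_ne_top, fun A y => ?_⟩
  have hinter : e '' univ.pi A ∩ (e y +ᵥ e '' univ.pi A) =
      e.symm ⁻¹' univ.pi fun i => A i ∩ (y i +ᵥ A i) := by
    ext x
    simp [e.image_eq_preimage_symm, mem_vadd_set_iff_neg_vadd_mem, forall_and]
  calc ecovariogram μ (e '' univ.pi A) (e y)
      = μ.map e.symm (univ.pi fun i => A i ∩ (y i +ᵥ A i)) := by
        rw [ecovariogram, hinter]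
        exact (e.symm.toHomeomorph.toMeasurableEquiv.map_apply _).symm
    _ = _ := by
        refine (DFunLike.congr_fun hscalar _).trans ?_
        rw [Measure.smul_apply, Measure.pi_pi, ENNReal.smul_def, smul_eq_mul]
        rfl

theorem ecovariogram_eq_of_ecovariogram_sum_eq {V ι : Type*} [NormedAddCommGroup V]
    [NormedSpace ℝ V] [FiniteDimensional ℝ V] [MeasurableSpace V] [BorelSpace V] [Fintype ι]
    [DecidableEq ι] {E : ι → Submodule ℝ V} (hE : DirectSum.IsInternal E) {μ : Measure V}
    [μ.IsAddHaarMeasure] (ν : ∀ i, Measure (E i)) [∀ i, (ν i).IsAddHaarMeasure]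
    {A B : ι → Set V} (hA : ∀ i, A i ⊆ E i) (hB : ∀ i, B i ⊆ E i) (hAcomp : ∀ i, IsCompact (A i))
    (hBcomp : ∀ i, IsCompact (B i)) (hA_zero : μ (∑ i, A i) ≠ 0)
    (h : ecovariogram μ (∑ i, A i) = ecovariogram μ (∑ i, B i)) (i : ι) :
    ecovariogram (ν i) ((↑) ⁻¹' A i) = ecovariogram (ν i) ((↑) ⁻¹' B i) := by
  have hcomp : ∀ {C : ι → Set V}, (∀ i, IsCompact (C i)) → ∀ i,
      IsCompact ((↑) ⁻¹' C i : Set (E i)) := fun hC i =>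
    (E i).closed_of_finiteDimensional.isClosedEmbedding_subtypeVal.isCompact_preimage (hC i)
  obtain ⟨c, hc_zero, hc_top, hc⟩ :=
    exists_ecovariogram_image_univ_pi_eq μ ν (internalPiEquiv hE).toContinuousLinearEquiv
  simp only [LinearEquiv.coe_toContinuousLinearEquiv'] at hc
  refine ecovariogram_eq_of_prod_eq (fun j => (hcomp hAcomp j).measurableSet)
    (fun j => (hcomp hBcomp j).measurableSet) (fun j => ?_)
    (fun j => (hcomp hAcomp j).measure_ne_top) (fun y => ?_) i
  · have hprod := hc (fun i => (↑) ⁻¹' A i) 0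
    rw [internalPiEquiv_image_univ_pi hE hA, map_zero, ecovariogram_zero] at hprod
    rw [hprod] at hA_zero
    simpa using Finset.prod_ne_zero_iff.1 (right_ne_zero_of_mul hA_zero) j (Finset.mem_univ j)
  · rw [← ENNReal.mul_right_inj hc_zero hc_top, ← hc, ← hc, internalPiEquiv_image_univ_pi hE hA,
      internalPiEquiv_image_univ_pi hE hB, h]

end DirectSums

section EuclideanSpace

theorem ecovariogram_eq_zero_of_notMem {V : Type*} [AddCommGroup V] [Module ℝ V]
    [MeasurableSpace V] (μ : Measure V) {E : Submodule ℝ V} {A : Set V} (hA : A ⊆ E) {x : V}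
    (hx : x ∉ E) : ecovariogram μ A x = 0 := by
  have hempty : A ∩ (x +ᵥ A) = ∅ := by
    rw [← not_nonempty_iff_eq_empty, inter_comm, vadd_inter_nonempty_iff']
    rintro ⟨a, b, ⟨ha, hb⟩, rfl⟩
    exact hx (E.sub_mem (hA ha) (hA hb))
  rw [ecovariogram, hempty, measure_empty]

theorem ecovariogram_hausdorffMeasure_coe {V : Type*} [NormedAddCommGroup V] [NormedSpace ℝ V]
    [MeasurableSpace V] [BorelSpace V] {d : ℝ} (hd : 0 ≤ d) {E : Submodule ℝ V} {A : Set V}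
    (hA : A ⊆ E) (x : E) :
    ecovariogram μH[d] A (x : V) = ecovariogram (μH[d] : Measure E) ((↑) ⁻¹' A) x := by
  have hiso : Isometry (Subtype.val : E → V) := isometry_subtype_coe
  have himage : (↑) '' ((↑) ⁻¹' A : Set E) = A :=
    image_preimage_eq_of_subset (Subtype.range_coe.symm ▸ hA)
  have htranslate := image_vadd_distrib E.subtype x ((↑) ⁻¹' A)
  rw [E.coe_subtype, himage] at htranslate
  rw [ecovariogram, ecovariogram, ← hiso.hausdorffMeasure_image (.inl hd),
    image_inter Subtype.val_injective, htranslate, himage]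

variable {n : ℕ} {K L : Set (EuclideanSpace ℝ (Fin n))}

theorem covariogram_eq_covariogram_iff (hK : volume K ≠ ∞) (hL : volume L ≠ ∞) :
    covariogram K = covariogram L ↔ ecovariogram volume K = ecovariogram volume L := by
  simp only [funext_iff]
  exact forall_congr' fun x => ENNReal.toReal_eq_toReal_iff' (ecovariogram_ne_top hK x)
    (ecovariogram_ne_top hL x)

theorem covariogramDim_eq_of_ecovariogram_eq {E : Submodule ℝ (EuclideanSpace ℝ (Fin n))}
    (hK : K ⊆ E) (hL : L ⊆ E) (hKspan : vectorSpan ℝ K = E) (hLspan : vectorSpan ℝ L = E)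
    (h : ecovariogram (μH[finrank ℝ E] : Measure E) ((↑) ⁻¹' K) =
      ecovariogram μH[finrank ℝ E] ((↑) ⁻¹' L)) :
    covariogramDim K = covariogramDim L := by
  funext x
  change (ecovariogram _ K x).toReal = (ecovariogram _ L x).toReal
  rw [hKspan, hLspan]
  by_cases hx : x ∈ E
  · lift x to E using hx
    have hd : (0 : ℝ) ≤ finrank ℝ E := Nat.cast_nonneg _
    rw [ecovariogram_hausdorffMeasure_coe hd hK, ecovariogram_hausdorffMeasure_coe hd hL, h]
  · rw [ecovariogram_eq_zero_of_notMem _ hK hx, ecovariogram_eq_zero_of_notMem _ hL hx]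

end EuclideanSpace

theorem covariogram_and_direct_decomposition_general {n : ℕ} {ι : Type*} [Fintype ι]
    [DecidableEq ι] {E : ι → Submodule ℝ (EuclideanSpace ℝ (Fin n))}
    (hE : DirectSum.IsInternal E) {A : ι → Set (EuclideanSpace ℝ (Fin n))} (hA : ∀ i, A i ⊆ E i)
    (hconv : Convex ℝ (∑ i, A i)) (hcomp : IsCompact (∑ i, A i))
    (hint : (interior (∑ i, A i)).Nonempty) {L : Set (EuclideanSpace ℝ (Fin n))}
    (hLconv : Convex ℝ L) (hLcomp : IsCompact L)
    (hcov : covariogram (∑ i, A i) = covariogram L) :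
    ∃ B : ι → Set (EuclideanSpace ℝ (Fin n)),
      (∀ i, Convex ℝ (B i) ∧ IsCompact (B i) ∧ (B i).Nonempty ∧ B i ⊆ E i ∧
        (IsDirectlyIndecomposable (A i) ↔ IsDirectlyIndecomposable (B i)) ∧
        covariogramDim (A i) = covariogramDim (B i)) ∧
      L = ∑ i, B i := by
  have hne : (∑ i, A i).Nonempty := hint.mono interior_subset
  have hecov := (covariogram_eq_covariogram_iff hcomp.measure_ne_top hLcomp.measure_ne_top).1 hcov
  have hsub : (∑ i, A i) - ∑ i, A i = L - L :=
    sub_self_eq_of_ecovariogram_eq hconv hcomp hint hLconv hLcomp hecov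
  have hLne : L.Nonempty := (hsub ▸ hne.sub hne).of_sub_left
  obtain ⟨B, hB, rfl⟩ :=
    exists_eq_sum_of_sub_self_eq_sum_sub_self hE hA hLconv hLcomp hLne hsub
  choose hBconv hBcomp hBne hBE hsub_i using hB
  have himage := internalProj_image_sum hE hA hne
  have hAconv : ∀ i, Convex ℝ (A i) := fun i => himage i ▸ hconv.linear_image _
  have hAcomp : ∀ i, IsCompact (A i) := fun i =>
    himage i ▸ hcomp.image (internalProj hE i).continuous_of_finiteDimensional
  have hAne : ∀ i, (A i).Nonempty := fun i => himage i ▸ hne.image _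
  have hAspan : ∀ i, vectorSpan ℝ (A i) = E i :=
    vectorSpan_eq_of_vectorSpan_sum_eq_top hE hA hne <| by
      rw [← direction_affineSpan, hconv.interior_nonempty_iff_affineSpan_eq_top.1 hint,
        AffineSubspace.direction_top]
  have hecov_i := ecovariogram_eq_of_ecovariogram_sum_eq hE
    (fun i => (μH[finrank ℝ (E i)] : Measure (E i))) hA hBE hAcomp hBcomp
    ((addHaar_ne_zero_iff_interior_nonempty hconv).2 hint) hecov
  refine ⟨B, fun i => ⟨hBconv i, hBcomp i, hBne i, hBE i, ⟨fun h => ?_, fun h => ?_⟩, ?_⟩, rfl⟩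
  · exact h.of_sub_self_eq (hAconv i) (hAcomp i) (hAne i) (hsub_i i)
  · exact h.of_sub_self_eq (hBconv i) (hBcomp i) (hBne i) (hsub_i i).symm
  · exact covariogramDim_eq_of_ecovariogram_eq (hA i) (hBE i) (hAspan i)
      ((vectorSpan_eq_of_sub_self_eq (R := ℝ) (hsub_i i)).symm.trans (hAspan i)) (hecov_i i)

/-- If `K = K₁ ⊕ … ⊕ K_s` is the representation of the convex body `K ⊆ ℝⁿ` in terms of
directly indecomposable convex bodies `K_i ⊆ E_i`, with `E₁ ⊕ … ⊕ E_s = ℝⁿ`, and `L` is a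
convex body with `g_K = g_L`, then `L = L₁ ⊕ … ⊕ L_s` where each `L_i` is a directly
indecomposable convex body contained in `E_i` with `g_{K_i} = g_{L_i}`. -/
theorem covariogram_and_direct_decomposition
    (n s : ℕ) (K : Set (EuclideanSpace ℝ (Fin n)))
    (hKconv : Convex ℝ K) (hKcomp : IsCompact K) (hKint : (interior K).Nonempty)
    (Ki : Fin s → Set (EuclideanSpace ℝ (Fin n)))
    (Ei : Fin s → Submodule ℝ (EuclideanSpace ℝ (Fin n)))
    (hKi : ∀ i, Convex ℝ (Ki i) ∧ IsCompact (Ki i) ∧ (Ki i).Nonempty ∧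
      Ki i ⊆ (Ei i : Set (EuclideanSpace ℝ (Fin n))) ∧
      1 ≤ Module.finrank ℝ (vectorSpan ℝ (Ki i)) ∧
      IsDirectlyIndecomposable (Ki i))
    (hEi : DirectSum.IsInternal Ei)
    (hsum : K = ∑ i, Ki i)
    (L : Set (EuclideanSpace ℝ (Fin n)))
    (hLconv : Convex ℝ L) (hLcomp : IsCompact L) (hLint : (interior L).Nonempty)
    (hcov : covariogram K = covariogram L) :
    ∃ Li : Fin s → Set (EuclideanSpace ℝ (Fin n)),
      (∀ i, Convex ℝ (Li i) ∧ IsCompact (Li i) ∧ (Li i).Nonempty ∧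
        Li i ⊆ (Ei i : Set (EuclideanSpace ℝ (Fin n))) ∧
        IsDirectlyIndecomposable (Li i) ∧
        covariogramDim (Ki i) = covariogramDim (Li i)) ∧
      L = ∑ i, Li i := by
  subst hsum
  obtain ⟨Li, hLi, hL⟩ := covariogram_and_direct_decomposition_general hEi
    (fun i => (hKi i).2.2.2.1) hKconv hKcomp hKint hLconv hLcomp hcov
  refine ⟨Li, fun i => ?_, hL⟩
  obtain ⟨hconv, hcomp, hne, hsubset, hindec, hcovDim⟩ := hLi i
  exact ⟨hconv, hcomp, hne, hsubset, hindec.1 (hKi i).2.2.2.2.2, hcovDim⟩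
end

section
/- A convex body K ⊂ ℝⁿ is directly indecomposable if and only if its difference body DK = K + (−K) is directly indecomposable. -/
open MeasureTheory Pointwise

/-!
If `K - K = L + M` with `L`, `M` in complementary subspaces `E₁`, `E₂` and `p`, `q` are the
associated projections, then `p(K) - p(K) = L` and `q(K) - q(K) = M`. So `N = p(K) + q(K)` contains
`K` and satisfies `N - N = K - K`, whence `N - K ⊆ K - K`. Cancelling the compact set `-K` gives
`N ⊆ K`, because `K` is closed and convex; thus `K` splits along `E₁`, `E₂` as well. Conversely
`(L + M) - (L + M) = (L - L) + (M - M)`. Since `S - S` is a point exactly when `S` is, trivial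
summands correspond to trivial summands in both directions.
-/

section AddGroup

variable {G : Type*} [AddGroup G]

lemma subsingleton_sub_self_iff {S : Set G} : (S - S).Subsingleton ↔ S.Subsingleton := by
  refine ⟨fun h x hx y hy ↦ ?_, fun h ↦ h.image2 h _⟩
  exact sub_left_injective (h (Set.sub_mem_sub hx hx) (Set.sub_mem_sub hy hx))

lemma sub_self_subset_coe {σ : Type*} [SetLike σ G] [AddSubgroupClass σ G] {H : σ} {S : Set G}
    (hS : S ⊆ H) : S - S ⊆ H :=
  Set.sub_subset_iff.2 fun _ hx _ hy ↦ sub_mem (hS hx) (hS hy)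

end AddGroup

lemma finrank_vectorSpan_eq_zero_iff_subsingleton {k V P : Type*} [DivisionRing k]
    [AddCommGroup V] [Module k V] [FiniteDimensional k V] [AddTorsor V P] {S : Set P} :
    Module.finrank k (vectorSpan k S) = 0 ↔ S.Subsingleton := by
  rw [Submodule.finrank_eq_zero, vectorSpan_eq_bot_iff_subsingleton]

section Projection

variable {R V : Type*} [Ring R] [AddCommGroup V] [Module R V] {E₁ E₂ : Submodule R V}

lemma projection_image_subset (hE : IsCompl E₁ E₂) (K : Set V) : E₁.projection E₂ hE '' K ⊆ E₁ :=
  Set.image_subset_iff.2 fun x _ ↦ Submodule.projection_apply_mem hE x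

lemma subset_projection_image_add (hE : IsCompl E₁ E₂) (K : Set V) :
    K ⊆ E₁.projection E₂ hE '' K + E₂.projection E₁ hE.symm '' K := fun x hx ↦
  ⟨_, Set.mem_image_of_mem _ hx, _, Set.mem_image_of_mem _ hx,
    Submodule.projection_add_projection_eq_self hE x⟩

lemma projection_image_add (hE : IsCompl E₁ E₂) {L M : Set V} (hL : L ⊆ E₁) (hM : M ⊆ E₂)
    (hMne : M.Nonempty) : E₁.projection E₂ hE '' (L + M) = L := by
  have image_left : E₁.projection E₂ hE '' L = L :=
    (Set.image_congr fun _ hx ↦ Submodule.projection_apply_of_mem_left hE (hL hx)).trans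
      (Set.image_id' L)
  have image_right : E₁.projection E₂ hE '' M = 0 :=
    (Set.image_congr fun _ hx ↦ Submodule.projection_apply_of_mem_right hE (hM hx)).trans
      (hMne.image_const 0)
  rw [Set.image_add, image_left, image_right, add_zero]

lemma projection_image_sub_self (hE : IsCompl E₁ E₂) {K L M : Set V} (hL : L ⊆ E₁)
    (hM : M ⊆ E₂) (hMne : M.Nonempty) (hKLM : K - K = L + M) :
    E₁.projection E₂ hE '' K - E₁.projection E₂ hE '' K = L := by
  rw [← Set.image_sub, hKLM, projection_image_add hE hL hM hMne]

end Projection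

lemma isCompact_sub {G : Type*} [TopologicalSpace G] [Sub G] [ContinuousSub G] {S T : Set G}
    (hS : IsCompact S) (hT : IsCompact T) : IsCompact (S - T) := by
  rw [← Set.sub_image_prod]
  exact (hS.prod hT).image continuous_sub

section LocallyConvex

variable {V : Type*} [AddCommGroup V] [Module ℝ V] [TopologicalSpace V] [IsTopologicalAddGroup V]
  [ContinuousSMul ℝ V] [LocallyConvexSpace ℝ V]

-- A functional separating a point of `N` from `K`, maximized over `A`, contradicts `N + A ⊆ K + A`.
lemma subset_of_add_subset_add_right {K N A : Set V} (hKconv : Convex ℝ K) (hKclosed : IsClosed K)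
    (hAcomp : IsCompact A) (hAne : A.Nonempty) (hNA : N + A ⊆ K + A) : N ⊆ K := by
  intro x hxN
  by_contra hxK
  obtain ⟨f, u, hfK, hux⟩ := geometric_hahn_banach_closed_point hKconv hKclosed hxK
  obtain ⟨a, haA, ha_max⟩ := hAcomp.exists_isMaxOn hAne f.continuous.continuousOn
  obtain ⟨y, hyK, b, hbA, hyb : y + b = x + a⟩ := hNA (Set.add_mem_add hxN haA)
  have hf_eq : f y + f b = f x + f a := by rw [← map_add, hyb, map_add]
  have hf_le : f b ≤ f a := ha_max hbA
  linarith [hfK y hyK]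

lemma eq_of_subset_of_sub_self_eq [T2Space V] {K N : Set V} (hKconv : Convex ℝ K)
    (hKcomp : IsCompact K) (hKne : K.Nonempty) (hKN : K ⊆ N) (hsub : N - N = K - K) : K = N := by
  refine hKN.antisymm (subset_of_add_subset_add_right hKconv hKcomp.isClosed hKcomp.neg hKne.neg ?_)
  calc N + -K = N - K := (sub_eq_add_neg N K).symm
    _ ⊆ N - N := Set.sub_subset_sub_left hKN
    _ = K + -K := by rw [hsub, sub_eq_add_neg]

theorem eq_projection_image_add_of_sub_self_eq_add [T2Space V] {K L M : Set V}
    {E₁ E₂ : Submodule ℝ V} (hKconv : Convex ℝ K) (hKcomp : IsCompact K) (hE : IsCompl E₁ E₂)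
    (hL : L ⊆ E₁) (hM : M ⊆ E₂) (hLne : L.Nonempty) (hMne : M.Nonempty) (hKLM : K - K = L + M) :
    K = E₁.projection E₂ hE '' K + E₂.projection E₁ hE.symm '' K := by
  have hKne : K.Nonempty := (hKLM ▸ hLne.add hMne : (K - K).Nonempty).of_sub_left
  refine eq_of_subset_of_sub_self_eq hKconv hKcomp hKne (subset_projection_image_add hE K) ?_
  rw [add_sub_add_comm, projection_image_sub_self hE hL hM hMne hKLM,
    projection_image_sub_self hE.symm hM hL hLne (hKLM.trans (add_comm L M)), hKLM]

end LocallyConvex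

namespace IsDirectlyIndecomposable

variable {n : ℕ} {K : Set (EuclideanSpace ℝ (Fin n))}

theorem of_sub_self (h : IsDirectlyIndecomposable (K - K)) : IsDirectlyIndecomposable K := by
  intro L M E₁ E₂ hE hL hM hLconv hLcomp hLne hMconv hMcomp hMne hKLM
  have hsplit : K - K = (L - L) + (M - M) := by rw [hKLM, add_sub_add_comm]
  have htrivial := h (L - L) (M - M) E₁ E₂ hE (sub_self_subset_coe hL) (sub_self_subset_coe hM)
    (hLconv.sub hLconv) (isCompact_sub hLcomp hLcomp) (hLne.sub hLne)
    (hMconv.sub hMconv) (isCompact_sub hMcomp hMcomp) (hMne.sub hMne) hsplit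
  simpa only [finrank_vectorSpan_eq_zero_iff_subsingleton, subsingleton_sub_self_iff]
    using htrivial

theorem sub_self (h : IsDirectlyIndecomposable K) (hKconv : Convex ℝ K) (hKcomp : IsCompact K) :
    IsDirectlyIndecomposable (K - K) := by
  intro L M E₁ E₂ hE hL hM _ _ hLne _ _ hMne hKLM
  have hKne : K.Nonempty := (hKLM ▸ hLne.add hMne : (K - K).Nonempty).of_sub_left
  let p := E₁.projection E₂ hE
  let q := E₂.projection E₁ hE.symm
  have hsplit : K = p '' K + q '' K :=
    eq_projection_image_add_of_sub_self_eq_add hKconv hKcomp hE hL hM hLne hMne hKLM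
  have hp : p '' K - p '' K = L := projection_image_sub_self hE hL hM hMne hKLM
  have hq : q '' K - q '' K = M :=
    projection_image_sub_self hE.symm hM hL hLne (hKLM.trans (add_comm L M))
  have htrivial := h (p '' K) (q '' K) E₁ E₂ hE
    (projection_image_subset hE K) (projection_image_subset hE.symm K)
    (hKconv.linear_image p) (hKcomp.image p.continuous_of_finiteDimensional) (hKne.image p)
    (hKconv.linear_image q) (hKcomp.image q.continuous_of_finiteDimensional) (hKne.image q) hsplit
  rw [← hp, ← hq]
  simpa only [finrank_vectorSpan_eq_zero_iff_subsingleton, subsingleton_sub_self_iff]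
    using htrivial

end IsDirectlyIndecomposable

theorem directlyIndecomposable_iff_differenceBody_general
    {n : ℕ} {K : Set (EuclideanSpace ℝ (Fin n))} (hKconv : Convex ℝ K) (hKcomp : IsCompact K) :
    IsDirectlyIndecomposable K ↔ IsDirectlyIndecomposable (K + (-K)) := by
  rw [← sub_eq_add_neg]
  exact ⟨fun h ↦ h.sub_self hKconv hKcomp, .of_sub_self⟩

/-- A convex body `K ⊆ ℝⁿ` is directly indecomposable if and only if its difference body
`DK = K + (−K)` is directly indecomposable. -/
theorem directlyIndecomposable_iff_differenceBody
    (n : ℕ) (K : Set (EuclideanSpace ℝ (Fin n)))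
    (hKconv : Convex ℝ K) (hKcomp : IsCompact K) (hKint : (interior K).Nonempty) :
    IsDirectlyIndecomposable K ↔ IsDirectlyIndecomposable (K + (-K)) :=
  directlyIndecomposable_iff_differenceBody_general hKconv hKcomp
end
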